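/- Let (G,C) be a strongly connected inhomogeneous Mauldin–Williams graph in ℝ^d satisfying the SOSC with open sets (U_i)_{i∈V} and with ∫₀^∞ e^{−s₀(G)t} N_{e^{−t}}(C_i) dt < ∞ for all i ∈ V. Then for every i ∈ V, lim_{t→∞} e^{−s₀(G)t} ( N_{e^{−t}}(K_i^C) − N_{e^{−t}}(K_i^C \ [∂U_i]_{e^{−t}}) ) = 0. -/

import Mathlib

open Set Filter Topology MeasureTheory Metric

noncomputable section

/-- Points of `ℝ^d`. -/
abbrev Pt (d : ℕ) := EuclideanSpace ℝ (Fin d)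

/-- The `r`-covering number of `A ⊆ ℝ^d`: the least number of closed balls of
radius `r` needed to cover `A`. -/
noncomputable def coveringNumber {d : ℕ} (A : Set (Pt d)) (r : ℝ) : ℕ :=
  sInf {k : ℕ | ∃ c : Fin k → Pt d, A ⊆ ⋃ i, Metric.closedBall (c i) r}

/-- A Mauldin–Williams graph in `ℝ^d` over a finite directed multigraph with
vertex type `V` and edge type `E`: each vertex `i` carries a non-empty compact
set `X i` equal to the closure of its interior, and each edge `e` carries a
contractive similarity `S e` of ratio `r e ∈ (0,1)` mapping `X (term e)` into
`X (init e)`. -/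
structure MWGraph (d : ℕ) (V E : Type) [Fintype V] [Fintype E] where
  init : E → V
  term : E → V
  X : V → Set (Pt d)
  S : E → Pt d → Pt d
  r : E → ℝ
  X_nonempty : ∀ i, (X i).Nonempty
  X_compact : ∀ i, IsCompact (X i)
  X_regular : ∀ i, closure (interior (X i)) = X i
  r_pos : ∀ e, 0 < r e
  r_lt_one : ∀ e, r e < 1
  S_maps : ∀ e, Set.MapsTo (S e) (X (term e)) (X (init e))
  S_sim : ∀ e x y, dist (S e x) (S e y) = r e * dist x y

namespace MWGraph

variable {d : ℕ} {V E : Type} [Fintype V] [Fintype E]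

variable (G : MWGraph d V E)

/-- `G.IsPathFrom j γ` holds iff the list of edges `γ` is a directed path
starting at vertex `j`. -/
def IsPathFrom : V → List E → Prop
  | _, [] => True
  | j, e :: es => G.init e = j ∧ IsPathFrom (G.term e) es

/-- Terminal vertex of the path `γ` starting at `j`. -/
def pathTerm : V → List E → V
  | j, [] => j
  | _, e :: es => pathTerm (G.term e) es

/-- `S_γ = S_{e₁} ∘ ⋯ ∘ S_{eₙ}` (with `S_∅ = id`). -/
def pathMap : List E → Pt d → Pt d
  | [] => id
  | e :: es => G.S e ∘ pathMap es

/-- `r_γ = r_{e₁} ⋯ r_{eₙ}` (with `r_∅ = 1`). -/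
def pathRatio (γ : List E) : ℝ := (γ.map G.r).prod

/-- The underlying multigraph is strongly connected: for every ordered pair of
vertices there is a (non-empty) directed path from the first to the second. -/
def StronglyConnected : Prop :=
  ∀ i j : V, ∃ γ : List E, γ ≠ [] ∧ G.IsPathFrom i γ ∧ G.pathTerm i γ = j

/-- `K` is the list of graph-directed self-similar sets of `G`: the unique list
of non-empty compact sets with `K i = ⋃_{e ∈ E_i} S_e (K (term e))`. -/
def IsAttractor (K : V → Set (Pt d)) : Prop :=
  (∀ i, IsCompact (K i)) ∧ (∀ i, (K i).Nonempty) ∧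
    ∀ i, K i = ⋃ e ∈ {e : E | G.init e = i}, G.S e '' K (G.term e)

/-- `C` is an admissible list of condensation sets: compact subsets of the `X i`. -/
def IsCondensation (C : V → Set (Pt d)) : Prop :=
  ∀ i, IsCompact (C i) ∧ C i ⊆ G.X i

/-- `K` is the list of inhomogeneous graph-directed self-similar sets of `(G, C)`:
the unique list of non-empty compact sets with
`K i = ⋃_{e ∈ E_i} S_e (K (term e)) ∪ C i`. -/
def IsInhomAttractor (C : V → Set (Pt d)) (K : V → Set (Pt d)) : Prop :=
  (∀ i, IsCompact (K i)) ∧ (∀ i, (K i).Nonempty) ∧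
    ∀ i, K i = (⋃ e ∈ {e : E | G.init e = i}, G.S e '' K (G.term e)) ∪ C i

/-- `G` satisfies the open set condition with the open sets `U`. -/
def IsOSCWith (U : V → Set (Pt d)) : Prop :=
  (∀ i, (U i).Nonempty) ∧ (∀ i, IsOpen (U i)) ∧ (∀ i, Bornology.IsBounded (U i)) ∧
    (∀ i, U i ⊆ G.X i) ∧
    (∀ i, (⋃ e ∈ {e : E | G.init e = i}, G.S e '' U (G.term e)) ⊆ U i) ∧
    ∀ e e' : E, G.init e = G.init e' → e ≠ e' →
      Disjoint (G.S e '' U (G.term e)) (G.S e' '' U (G.term e'))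

/-- The set `{-log r_γ : γ a directed cycle of G}`. -/
def cycleSet : Set ℝ :=
  {x : ℝ | ∃ (j : V) (γ : List E), γ ≠ [] ∧ G.IsPathFrom j γ ∧ G.pathTerm j γ = j ∧
    x = -Real.log (G.pathRatio γ)}

/-- `G_M`, the smallest closed additive subgroup of `ℝ` containing
`{-log r_γ : γ a directed cycle}`. -/
def GM : Set ℝ := closure ((AddSubgroup.closure (G.cycleSet) : AddSubgroup ℝ) : Set ℝ)

variable [DecidableEq V]

/-- The matrix `A_G^s` with entries `(A_G^s)_{ij} = Σ_{e ∈ E_{ij}} r_e^s`. -/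
def Amatrix (s : ℝ) : Matrix V V ℝ :=
  Matrix.of fun i j => ∑ e : E, if G.init e = i ∧ G.term e = j then G.r e ^ s else 0

end MWGraph

/-- Spectral radius of a real square matrix: the largest modulus of a complex
eigenvalue. -/
noncomputable def matrixSpectralRadius {n : Type} [Fintype n] [DecidableEq n]
    (A : Matrix n n ℝ) : ℝ :=
  sSup {x : ℝ | ∃ μ : ℂ, μ ∈ spectrum ℂ (A.map (fun a : ℝ => (a : ℂ))) ∧ x = ‖μ‖}

/-- `s` is the (unique) exponent `s ≥ 0` with `ρ(A_G^s) = 1`, i.e. `s = s₀(G)`. -/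
def IsS0 {d : ℕ} {V E : Type} [Fintype V] [Fintype E] [DecidableEq V]
    (G : MWGraph d V E) (s : ℝ) : Prop :=
  0 ≤ s ∧ matrixSpectralRadius (G.Amatrix s) = 1

section SpectralRadius

attribute [local instance] Matrix.linftyOpNormedRing Matrix.linftyOpNormedAlgebra

/-- If every complex eigenvalue of `A` has modulus at most `1`, the Neumann series of `z A`
converges for `0 ≤ z < 1`. -/
theorem summable_smul_pow_of_spectrum_le_one {n : Type} [Fintype n] [DecidableEq n]
    (A : Matrix n n ℂ) (hA : ∀ μ ∈ spectrum ℂ A, ‖μ‖ ≤ 1) {z : ℝ} (hz0 : 0 ≤ z) (hz : z < 1) :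
    Summable fun k : ℕ => (z : ℂ) ^ k • A ^ k := by
  obtain ⟨q, hzq, hq1⟩ := exists_between hz
  lift q to NNReal using hz0.trans hzq.le
  have hq0 : 0 < q := by exact_mod_cast hz0.trans_lt hzq
  have hrad : (q : ENNReal) < (spectralRadius ℂ A)⁻¹ := by
    have h1 : spectralRadius ℂ A ≤ 1 := by
      refine iSup₂_le fun μ hμ => ?_
      exact_mod_cast hA μ hμ
    refine lt_of_lt_of_le ?_ (ENNReal.one_le_inv.mpr h1)
    exact_mod_cast hq1
  have hd := (spectrum.differentiableOn_inverse_one_sub_smul (𝕜 := ℂ) hrad).hasFPowerSeriesOnBall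
    hq0
  have hs := (spectrum.hasFPowerSeriesOnBall_inverse_one_sub_smul ℂ A).exchange_radius hd
  have hmem : (z : ℂ) ∈ Metric.eball (0 : ℂ) q := by
    simp only [Metric.mem_eball, edist_zero_right]
    rw [← ofReal_norm, Complex.norm_real, Real.norm_of_nonneg hz0]
    exact (ENNReal.ofReal_lt_coe_iff hz0).mpr hzq
  have := (hs.hasSum hmem).summable
  simp only [ContinuousMultilinearMap.mkPiRing_apply, Finset.prod_const, Finset.card_univ,
    Fintype.card_fin] at this
  exact this

theorem norm_le_matrixSpectralRadius {n : Type} [Fintype n] [DecidableEq n]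
    (A : Matrix n n ℝ) {μ : ℂ} (hμ : μ ∈ spectrum ℂ (A.map (fun a : ℝ => (a : ℂ)))) :
    ‖μ‖ ≤ matrixSpectralRadius A := by
  refine le_csSup ?_ ⟨μ, hμ, rfl⟩
  refine ⟨‖A.map (fun a : ℝ => (a : ℂ))‖ * ‖(1 : Matrix n n ℂ)‖, ?_⟩
  rintro x ⟨ν, hν, rfl⟩
  exact spectrum.norm_le_norm_mul_of_mem hν

theorem summable_pow_apply_of_matrixSpectralRadius_le_one {n : Type} [Fintype n] [DecidableEq n]
    (A : Matrix n n ℝ) (hA : matrixSpectralRadius A ≤ 1) {z : ℝ} (hz0 : 0 ≤ z) (hz : z < 1)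
    (i j : n) : Summable fun k : ℕ => z ^ k * (A ^ k) i j := by
  have h := summable_smul_pow_of_spectrum_le_one (A.map (fun a : ℝ => (a : ℂ)))
    (fun μ hμ => (norm_le_matrixSpectralRadius A hμ).trans hA) hz0 hz
  have hij := Pi.summable.mp (Pi.summable.mp h i) j
  rw [← Complex.summable_ofReal]
  refine hij.congr fun k => ?_
  have : A.map (fun a : ℝ => (a : ℂ)) ^ k = (A ^ k).map (fun a : ℝ => (a : ℂ)) :=
    (Matrix.map_pow A Complex.ofRealHom k).symm
  rw [this]
  simp

end SpectralRadius

/-- For `z < 1`, a non-negative matrix of spectral radius at most one has a subinvariant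
probability vector for `z A`. -/
theorem exists_stdSimplex_mul_sum_le {n : Type} [Fintype n] [DecidableEq n] [Nonempty n]
    (A : Matrix n n ℝ) (hA0 : ∀ i j, 0 ≤ A i j) (hA : matrixSpectralRadius A ≤ 1)
    {z : ℝ} (hz0 : 0 ≤ z) (hz : z < 1) :
    ∃ v ∈ stdSimplex ℝ n, ∀ i, z * ∑ j, A i j * v j ≤ v i := by
  have hpow0 : ∀ (k : ℕ) i j, 0 ≤ (A ^ k) i j := by
    intro k
    induction k with
    | zero => intro i j; rw [pow_zero, Matrix.one_apply]; split_ifs <;> simp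
    | succ k ih =>
      intro i j
      rw [pow_succ, Matrix.mul_apply]
      exact Finset.sum_nonneg fun l _ => mul_nonneg (ih i l) (hA0 l j)
  set p : ℕ → n → ℝ := fun k i => ∑ j, z ^ k * (A ^ k) i j with hp
  have hp0 : ∀ k i, 0 ≤ p k i := fun k i =>
    Finset.sum_nonneg fun j _ => mul_nonneg (pow_nonneg hz0 k) (hpow0 k i j)
  have hps : ∀ i, Summable fun k => p k i := fun i => summable_sum fun j _ =>
    summable_pow_apply_of_matrixSpectralRadius_le_one A hA hz0 hz i j
  have hsucc : ∀ k i, p (k + 1) i = z * ∑ j, A i j * p k j := by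
    intro k i
    simp only [hp, pow_succ' A, Matrix.mul_apply, Finset.mul_sum]
    rw [Finset.sum_comm]
    refine Finset.sum_congr rfl fun j _ => Finset.sum_congr rfl fun l _ => ?_
    ring
  have hzero : ∀ i, p 0 i = 1 := fun i => by simp [hp, Matrix.one_apply]
  set y : n → ℝ := fun i => ∑' k, p k i with hy
  have hrec : ∀ i, y i = 1 + z * ∑ j, A i j * y j := by
    intro i
    have h1 : y i = p 0 i + ∑' k, p (k + 1) i := (hps i).tsum_eq_zero_add
    rw [h1, hzero]
    simp only [hsucc, hy]
    rw [tsum_mul_left, Summable.tsum_finsetSum fun j _ => (hps j).mul_left _]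
    simp only [tsum_mul_left]
  have hy0 : ∀ i, 0 ≤ y i := fun i => tsum_nonneg fun k => hp0 k i
  have hy1 : ∀ i, 1 ≤ y i := fun i => by
    rw [hrec i]
    have : 0 ≤ z * ∑ j, A i j * y j :=
      mul_nonneg hz0 (Finset.sum_nonneg fun j _ => mul_nonneg (hA0 i j) (hy0 j))
    linarith
  have hσ : 0 < ∑ i, y i := Finset.sum_pos (fun i _ => by linarith [hy1 i]) Finset.univ_nonempty
  refine ⟨fun i => y i / ∑ i, y i, ⟨fun i => div_nonneg (hy0 i) hσ.le, ?_⟩, fun i => ?_⟩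
  · rw [← Finset.sum_div, div_self hσ.ne']
  · have : z * ∑ j, A i j * (y j / ∑ i, y i) = (z * ∑ j, A i j * y j) / ∑ i, y i := by
      simp only [mul_div_assoc', ← Finset.sum_div]
    rw [this]
    exact div_le_div_of_nonneg_right (by linarith [hrec i]) hσ.le

/-- A non-negative matrix of spectral radius at most one has a subinvariant probability vector. -/
theorem exists_stdSimplex_sum_le {n : Type} [Fintype n] [DecidableEq n] [Nonempty n]
    (A : Matrix n n ℝ) (hA0 : ∀ i j, 0 ≤ A i j) (hA : matrixSpectralRadius A ≤ 1) :
    ∃ v ∈ stdSimplex ℝ n, ∀ i, ∑ j, A i j * v j ≤ v i := by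
  have hz : ∀ k : ℕ, 0 ≤ 1 - 1 / ((k : ℝ) + 1) ∧ 1 - 1 / ((k : ℝ) + 1) < 1 := fun k => by
    have h1 : 1 / ((k : ℝ) + 1) ≤ 1 := by
      rw [div_le_one (by positivity)]
      linarith [Nat.cast_nonneg (α := ℝ) k]
    have h2 : 0 < 1 / ((k : ℝ) + 1) := by positivity
    constructor <;> linarith
  choose w hw hwle using fun k : ℕ => exists_stdSimplex_mul_sum_le A hA0 hA (hz k).1 (hz k).2
  obtain ⟨v, hv, φ, hφ, hlim⟩ := (isCompact_stdSimplex ℝ n).tendsto_subseq hw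
  refine ⟨v, hv, fun i => ?_⟩
  have hcoord : ∀ j, Tendsto (fun k => w (φ k) j) atTop (𝓝 (v j)) := fun j =>
    (continuous_apply j).continuousAt.tendsto.comp hlim
  have hz1 : Tendsto (fun k : ℕ => 1 - 1 / ((φ k : ℝ) + 1)) atTop (𝓝 1) := by
    have h := (tendsto_one_div_add_atTop_nhds_zero_nat (𝕜 := ℝ)).comp hφ.tendsto_atTop
    simpa using h.const_sub 1
  have hsum : Tendsto (fun k => ∑ j, A i j * w (φ k) j) atTop (𝓝 (∑ j, A i j * v j)) :=
    tendsto_finsetSum _ fun j _ => (hcoord j).const_mul _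
  have := le_of_tendsto_of_tendsto' (hz1.mul hsum) (hcoord i) fun k => hwle (φ k) i
  simpa using this

namespace MWGraph

/-- A strongly connected Mauldin–Williams graph carries a strictly positive vector that is
subinvariant for the matrix `A_G^{s₀}`. -/
theorem exists_pos_subinvariant {d : ℕ} {V E : Type} [Fintype V] [Fintype E] [DecidableEq V]
    (G : MWGraph d V E) (hSC : G.StronglyConnected) {s : ℝ}
    (hs : matrixSpectralRadius (G.Amatrix s) ≤ 1) :
    ∃ v : V → ℝ, (∀ i, 0 < v i) ∧
      ∀ i, ∑ e with G.init e = i, G.r e ^ s * v (G.term e) ≤ v i := by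
  rcases isEmpty_or_nonempty V with hV | hV
  · exact ⟨fun _ => 1, fun i => hV.elim i, fun i => hV.elim i⟩
  have hA0 : ∀ i j, 0 ≤ G.Amatrix s i j := fun i j => Finset.sum_nonneg fun e _ => by
    split_ifs
    · exact Real.rpow_nonneg (G.r_pos e).le s
    · exact le_rfl
  obtain ⟨v, ⟨hv0, hv1⟩, hv⟩ := exists_stdSimplex_sum_le _ hA0 hs
  have hsub : ∀ i, ∑ e with G.init e = i, G.r e ^ s * v (G.term e) ≤ v i := by
    intro i
    refine le_trans (le_of_eq ?_) (hv i)
    simp only [Amatrix, Matrix.of_apply, Finset.sum_mul]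
    rw [Finset.sum_comm, Finset.sum_filter]
    refine Finset.sum_congr rfl fun e _ => ?_
    by_cases he : G.init e = i <;> simp [he]
  have hpath : ∀ (γ : List E) (i : V), G.IsPathFrom i γ → 0 < v (G.pathTerm i γ) → 0 < v i := by
    intro γ
    induction γ with
    | nil => intro i _ h; exact h
    | cons e γ ih =>
      rintro i ⟨rfl, hγ⟩ h
      refine lt_of_lt_of_le (mul_pos (Real.rpow_pos_of_pos (G.r_pos e) s) (ih _ hγ h)) ?_
      refine le_trans ?_ (hsub _)
      exact Finset.single_le_sum (f := fun e => G.r e ^ s * v (G.term e))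
        (fun e _ => mul_nonneg (Real.rpow_nonneg (G.r_pos e).le s) (hv0 _)) (by simp)
  obtain ⟨j, hj⟩ : ∃ j, 0 < v j := by
    by_contra! h
    have : ∑ i, v i ≤ 0 := Finset.sum_nonpos fun i _ => h i
    linarith
  refine ⟨v, fun i => ?_, hsub⟩
  obtain ⟨γ, -, hγ, hγj⟩ := hSC i j
  exact hpath γ i hγ (by rwa [hγj])

end MWGraph

section CoveringNumber

variable {d : ℕ} {A B : Set (Pt d)} {r : ℝ}

theorem coveringNumber_le_card {ι : Type*} [Fintype ι] (c : ι → Pt d)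
    (h : A ⊆ ⋃ i, closedBall (c i) r) : coveringNumber A r ≤ Fintype.card ι := by
  refine Nat.sInf_le ⟨c ∘ (Fintype.equivFin ι).symm, h.trans ?_⟩
  refine iUnion_subset fun i => ?_
  refine subset_iUnion_of_subset (Fintype.equivFin ι i) ?_
  simp

theorem exists_cover_coveringNumber (hA : Bornology.IsBounded A) (hr : 0 < r) :
    ∃ c : Fin (coveringNumber A r) → Pt d, A ⊆ ⋃ i, closedBall (c i) r := by
  refine Nat.sInf_mem (s := {k : ℕ | ∃ c : Fin k → Pt d, A ⊆ ⋃ i, closedBall (c i) r}) ?_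
  obtain ⟨t, -, ht, hcov⟩ := finite_cover_balls_of_compact hA.isCompact_closure hr
  have := ht.fintype
  refine ⟨Fintype.card t, fun k => ((Fintype.equivFin t).symm k : Pt d), fun x hx => ?_⟩
  obtain ⟨y, hy, hxy⟩ := mem_iUnion₂.mp (hcov (subset_closure hx))
  exact mem_iUnion.mpr ⟨Fintype.equivFin t ⟨y, hy⟩, by simpa using ball_subset_closedBall hxy⟩

theorem coveringNumber_mono (hAB : A ⊆ B) (hB : Bornology.IsBounded B) (hr : 0 < r) :
    coveringNumber A r ≤ coveringNumber B r := by
  obtain ⟨c, hc⟩ := exists_cover_coveringNumber hB hr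
  simpa using coveringNumber_le_card c (hAB.trans hc)

theorem coveringNumber_anti {r' : ℝ} (hA : Bornology.IsBounded A) (hr : 0 < r) (h : r ≤ r') :
    coveringNumber A r' ≤ coveringNumber A r := by
  obtain ⟨c, hc⟩ := exists_cover_coveringNumber hA hr
  simpa using coveringNumber_le_card c
    (hc.trans (iUnion_mono fun i => closedBall_subset_closedBall h))

theorem coveringNumber_union_le (hA : Bornology.IsBounded A) (hB : Bornology.IsBounded B)
    (hr : 0 < r) : coveringNumber (A ∪ B) r ≤ coveringNumber A r + coveringNumber B r := by
  obtain ⟨a, ha⟩ := exists_cover_coveringNumber hA hr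
  obtain ⟨b, hb⟩ := exists_cover_coveringNumber hB hr
  have := coveringNumber_le_card (A := A ∪ B) (r := r) (Sum.elim a b) (by
    rw [iUnion_sum]
    exact union_subset_union ha hb)
  simpa using this

theorem coveringNumber_empty : coveringNumber (∅ : Set (Pt d)) r = 0 := by
  simpa using coveringNumber_le_card (A := ∅) (r := r) (Fin.elim0 : Fin 0 → Pt d)
    (empty_subset _)

theorem coveringNumber_biUnion_le {ι : Type*} (s : Finset ι) (f : ι → Set (Pt d))
    (hf : ∀ i ∈ s, Bornology.IsBounded (f i)) (hr : 0 < r) :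
    coveringNumber (⋃ i ∈ s, f i) r ≤ ∑ i ∈ s, coveringNumber (f i) r := by
  classical
  induction s using Finset.induction_on with
  | empty => simp [coveringNumber_empty]
  | insert a s ha ih =>
    rw [Finset.set_biUnion_insert, Finset.sum_insert ha]
    have hs : ∀ i ∈ s, Bornology.IsBounded (f i) := fun i hi =>
      hf i (Finset.mem_insert_of_mem hi)
    refine (coveringNumber_union_le (hf a (Finset.mem_insert_self a s))
      ((Bornology.isBounded_biUnion_finset s).mpr hs) hr).trans ?_
    exact Nat.add_le_add_left (ih hs) _

theorem coveringNumber_image_le {ρ : ℝ} {f : Pt d → Pt d}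
    (hf : ∀ x y, dist (f x) (f y) = ρ * dist x y) (hρ : 0 < ρ)
    (hA : Bornology.IsBounded A) (hr : 0 < r) :
    coveringNumber (f '' A) r ≤ coveringNumber A (r / ρ) := by
  obtain ⟨c, hc⟩ := exists_cover_coveringNumber hA (div_pos hr hρ)
  have := coveringNumber_le_card (A := f '' A) (r := r) (f ∘ c) (by
    rintro _ ⟨x, hx, rfl⟩
    obtain ⟨i, hi⟩ := mem_iUnion.mp (hc hx)
    refine mem_iUnion.mpr ⟨i, ?_⟩
    rw [mem_closedBall, le_div_iff₀ hρ] at hi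
    rw [mem_closedBall, Function.comp_apply, hf]
    linarith)
  simpa using this

/-- If the scaled covering numbers of a bounded set are integrable, they tend to zero. -/
theorem tendsto_exp_mul_coveringNumber {s : ℝ} (hs : 0 ≤ s) (hA : Bornology.IsBounded A)
    (hint : ∫⁻ t in Ioi (0 : ℝ),
      ENNReal.ofReal (Real.exp (-s * t) * (coveringNumber A (Real.exp (-t)) : ℝ)) < ⊤) :
    Tendsto (fun t : ℝ => Real.exp (-s * t) * (coveringNumber A (Real.exp (-t)) : ℝ))
      atTop (𝓝 0) := by
  set f : ℝ → ℝ := fun t => Real.exp (-s * t) * (coveringNumber A (Real.exp (-t)) : ℝ) with hf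
  set I : ℕ → ENNReal := fun n =>
    ∫⁻ t in Ioc (n : ℝ) (n + 1), ENNReal.ofReal (f t) with hI
  have hcmp : ∀ u t : ℝ, u ≤ t → t ≤ u + 3 → Real.exp (-(3 * s)) * f u ≤ f t := by
    intro u t hut htu
    have h1 : (coveringNumber A (Real.exp (-u)) : ℝ) ≤ coveringNumber A (Real.exp (-t)) := by
      exact_mod_cast coveringNumber_anti hA (Real.exp_pos _)
        (Real.exp_le_exp.mpr (neg_le_neg hut))
    rw [hf]
    simp only
    rw [← mul_assoc, ← Real.exp_add]
    gcongr
    nlinarith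
  have hsum : ∑' n, I n ≠ ⊤ := by
    rw [hI, ← lintegral_iUnion (fun n => measurableSet_Ioc)]
    · refine ((lintegral_mono_set ?_).trans_lt hint).ne
      exact iUnion_subset fun n x hx => lt_of_le_of_lt (Nat.cast_nonneg n) hx.1
    · intro m n hmn
      rcases lt_or_gt_of_ne hmn with h | h
      · refine Set.disjoint_left.mpr fun x hx hy => ?_
        have : (m : ℝ) + 1 ≤ n := by exact_mod_cast h
        linarith [hx.2, hy.1]
      · refine Set.disjoint_left.mpr fun x hx hy => ?_
        have : (n : ℝ) + 1 ≤ m := by exact_mod_cast h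
        linarith [hx.1, hy.2]
  have hI0 : Tendsto I atTop (𝓝 0) := ENNReal.tendsto_atTop_zero_of_tsum_ne_top hsum
  have hbound : ∀ u : ℝ, 0 ≤ u →
      ENNReal.ofReal (Real.exp (-(3 * s)) * f u) ≤ I (⌊u⌋₊ + 1) := by
    intro u hu
    have hfl := Nat.floor_le hu
    have hfl' := Nat.lt_floor_add_one u
    calc ENNReal.ofReal (Real.exp (-(3 * s)) * f u)
        = ∫⁻ _ in Ioc (((⌊u⌋₊ + 1 : ℕ) : ℝ)) ((⌊u⌋₊ + 1 : ℕ) + 1),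
            ENNReal.ofReal (Real.exp (-(3 * s)) * f u) := by simp
      _ ≤ I (⌊u⌋₊ + 1) := by
        refine setLIntegral_mono' measurableSet_Ioc fun t ht => ?_
        push_cast at ht
        exact ENNReal.ofReal_le_ofReal (hcmp u t (by linarith [ht.1]) (by linarith [ht.2]))
  have hI1 : Tendsto (fun u : ℝ => I (⌊u⌋₊ + 1)) atTop (𝓝 0) :=
    hI0.comp ((tendsto_add_atTop_nat 1).comp tendsto_nat_floor_atTop)
  have h0 : Tendsto (fun u => ENNReal.ofReal (Real.exp (-(3 * s)) * f u)) atTop (𝓝 0) :=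
    tendsto_of_tendsto_of_tendsto_of_le_of_le' tendsto_const_nhds hI1
      (Eventually.of_forall fun _ => zero_le) (by
        filter_upwards [eventually_ge_atTop 0] with u hu using hbound u hu)
  have h1 : Tendsto (fun u => Real.exp (-(3 * s)) * f u) atTop (𝓝 0) := by
    have := (ENNReal.tendsto_toReal ENNReal.zero_ne_top).comp h0
    refine this.congr fun u => ?_
    exact ENNReal.toReal_ofReal (by positivity)
  have h2 := h1.const_mul (Real.exp (3 * s))
  simpa [← mul_assoc, ← Real.exp_add] using h2

end CoveringNumber

/-- A map of Euclidean space scaling all distances by a positive factor is onto. -/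
theorem surjective_of_dist_eq_mul {d : ℕ} {ρ : ℝ} (hρ : 0 < ρ) {f : Pt d → Pt d}
    (hf : ∀ x y, dist (f x) (f y) = ρ * dist x y) : Function.Surjective f := by
  have hiso : Isometry fun x => ρ⁻¹ • f x := Isometry.of_dist_eq fun x y => by
    rw [dist_smul₀, hf, Real.norm_of_nonneg (inv_nonneg.mpr hρ.le), inv_mul_cancel_left₀ hρ.ne']
  intro y
  obtain ⟨x, hx⟩ := (hiso.affineIsometryOfStrictConvexSpace.toAffineIsometryEquiv rfl).surjective
    (ρ⁻¹ • y)
  refine ⟨x, ?_⟩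
  have h : ρ⁻¹ • f x = ρ⁻¹ • y := by simpa using hx
  exact smul_right_injective _ (inv_ne_zero hρ.ne') h

theorem exists_pos_forall_le {ι : Type*} [Finite ι] (f : ι → ℝ) (hf : ∀ i, 0 < f i) :
    ∃ c, 0 < c ∧ ∀ i, c ≤ f i := by
  rcases isEmpty_or_nonempty ι with h | h
  · exact ⟨1, one_pos, fun i => h.elim i⟩
  · obtain ⟨i, hi⟩ := Finite.exists_min f
    exact ⟨f i, hf i, hi⟩

/-- Non-negative, locally bounded functions satisfying a strictly contractive renewal inequality
with vanishing inhomogeneity tend to zero. -/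
theorem tendsto_zero_of_contractive_renewal {ι : Type*} {H : ι → ℝ → ℝ} {v : ι → ℝ}
    {a b c : ℝ} (hv : ∀ i, 0 < v i) (hH : ∀ i t, 0 ≤ H i t) (hb : 0 < b) (hc : 0 < c)
    (hc1 : c ≤ 1)
    (hloc : ∀ x y : ℝ, ∃ M, ∀ i, ∀ u ∈ Icc x y, H i u ≤ M * v i)
    (hrec : ∀ κ > 0, ∀ᶠ t in atTop, ∀ M, 0 ≤ M →
      (∀ j, ∀ u ∈ Icc (t - a) (t - b), H j u ≤ M * v j) →
        ∀ i, H i t ≤ ((1 - c) * M + κ) * v i) (i : ι) :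
    Tendsto (H i) atTop (𝓝 0) := by
  set S : Set ℝ := {M | 0 ≤ M ∧ ∀ᶠ t in atTop, ∀ j, H j t ≤ M * v j}
  have hS_bdd : BddBelow S := ⟨0, fun M hM => hM.1⟩
  have hS_ne : S.Nonempty := by
    obtain ⟨T, hT⟩ := eventually_atTop.mp (hrec 1 one_pos)
    obtain ⟨M₀, hM₀⟩ := hloc (T - a) T
    set M := max M₀ (1 / c)
    have hM0 : 0 ≤ M := le_max_of_le_right (by positivity)
    have hcM : 1 ≤ c * M := by
      rw [← div_le_iff₀' hc]
      exact le_max_right _ _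
    have hstep : ∀ n : ℕ, ∀ t ∈ Icc (T - a) (T + n * b), ∀ j, H j t ≤ M * v j := by
      intro n
      induction n with
      | zero =>
        intro t ht j
        refine (hM₀ j t (by simpa using ht)).trans ?_
        exact mul_le_mul_of_nonneg_right (le_max_left _ _) (hv j).le
      | succ n ih =>
        intro t ht j
        rcases le_total t (T + n * b) with h | h
        · exact ih t ⟨ht.1, h⟩ j
        have hTt : T ≤ t := le_trans (by nlinarith [Nat.cast_nonneg (α := ℝ) n]) h
        have h2 := ht.2
        push_cast at h2
        refine (hT t hTt M hM0 (fun k u hu => ih u ⟨?_, ?_⟩ k) j).trans ?_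
        · linarith [hu.1]
        · linarith [hu.2]
        · exact mul_le_mul_of_nonneg_right (by linarith) (hv j).le
    refine ⟨M, hM0, ?_⟩
    filter_upwards [eventually_ge_atTop (T - a)] with t ht j
    obtain ⟨n, hn⟩ := exists_nat_ge ((t - T) / b)
    rw [div_le_iff₀ hb] at hn
    exact hstep n t ⟨ht, by linarith⟩ j
  have hS_step : ∀ M ∈ S, ∀ κ > 0, (1 - c) * M + κ ∈ S := by
    rintro M ⟨hM0, hM⟩ κ hκ
    refine ⟨add_nonneg (mul_nonneg (by linarith) hM0) hκ.le, ?_⟩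
    obtain ⟨T, hT⟩ := eventually_atTop.mp hM
    filter_upwards [hrec κ hκ, eventually_ge_atTop (T + a)] with t ht htT
    exact ht M hM0 fun j u hu => hT u (by linarith [hu.1]) j
  have hL : sInf S = 0 := by
    have hL0 : 0 ≤ sInf S := le_csInf hS_ne fun M hM => hM.1
    by_contra hne
    have hpos : 0 < sInf S := lt_of_le_of_ne hL0 (Ne.symm hne)
    have hε : 0 < c * sInf S / 4 := by positivity
    obtain ⟨M, hM, hMlt⟩ := exists_lt_of_csInf_lt hS_ne
      (lt_add_of_pos_right (sInf S) hε)
    have := csInf_le hS_bdd (hS_step M hM _ hε)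
    nlinarith [mul_le_mul_of_nonneg_left hMlt.le (show 0 ≤ 1 - c by linarith)]
  refine tendsto_order.mpr ⟨fun x hx => Eventually.of_forall fun t => hx.trans_le (hH i t),
    fun ε hε => ?_⟩
  obtain ⟨M, hM, hMlt⟩ := exists_lt_of_csInf_lt hS_ne
    (show sInf S < ε / v i by rw [hL]; exact div_pos hε (hv i))
  filter_upwards [hM.2] with t ht
  exact (ht i).trans_lt ((lt_div_iff₀ (hv i)).mp hMlt)

/-- The points of `A` at distance at most `δ` from the complement of `W`. -/
def boundaryLayer {d : ℕ} (A W : Set (Pt d)) (δ : ℝ) : Set (Pt d) :=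
  {x ∈ A | ∃ z ∉ W, dist x z ≤ δ}

namespace MWGraph

variable {d : ℕ} {V E : Type} [Fintype V] [Fintype E] (G : MWGraph d V E)

theorem dist_pathMap (γ : List E) (x y : Pt d) :
    dist (G.pathMap γ x) (G.pathMap γ y) = G.pathRatio γ * dist x y := by
  induction γ with
  | nil => simp [pathMap, pathRatio]
  | cons e γ ih =>
    simp only [pathMap, Function.comp_apply, G.S_sim, ih]
    simp [pathRatio, mul_assoc]

theorem pathRatio_pos (γ : List E) : 0 < G.pathRatio γ := by
  induction γ with
  | nil => simp [pathRatio]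
  | cons e γ ih =>
    have : G.pathRatio (e :: γ) = G.r e * G.pathRatio γ := by simp [pathRatio]
    rw [this]
    exact mul_pos (G.r_pos e) ih

theorem pathRatio_le_pow {q : ℝ} (hq : ∀ e, G.r e ≤ q) (γ : List E) :
    G.pathRatio γ ≤ q ^ γ.length := by
  induction γ with
  | nil => simp [pathRatio]
  | cons e γ ih =>
    have : G.pathRatio (e :: γ) = G.r e * G.pathRatio γ := by simp [pathRatio]
    rw [this, List.length_cons, pow_succ']
    exact mul_le_mul (hq e) ih (G.pathRatio_pos γ).le ((G.r_pos e).le.trans (hq e))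

theorem IsAttractor.exists_path {G : MWGraph d V E} {K : V → Set (Pt d)} (hK : G.IsAttractor K)
    (n : ℕ) : ∀ i, ∀ x ∈ K i, ∃ γ : List E, γ.length = n ∧ G.IsPathFrom i γ ∧
      ∃ y ∈ K (G.pathTerm i γ), G.pathMap γ y = x := by
  induction n with
  | zero => exact fun i x hx => ⟨[], rfl, trivial, x, hx, rfl⟩
  | succ n ih =>
    intro i x hx
    rw [hK.2.2 i] at hx
    simp only [mem_ofPred_eq, mem_iUnion, exists_prop] at hx
    obtain ⟨e, he, x', hx', rfl⟩ := hx
    obtain ⟨γ, hlen, hγ, y, hy, rfl⟩ := ih _ x' hx'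
    exact ⟨e :: γ, by simp [hlen], ⟨he, hγ⟩, y, hy, rfl⟩

/-- If the attractor meets the open set `W` at vertex `i`, some path maps a given bounded family
into `W`, at a positive distance from the complement. -/
theorem IsAttractor.exists_deep_path {G : MWGraph d V E} {K : V → Set (Pt d)}
    (hK : G.IsAttractor K) {B : V → Set (Pt d)} (hB : ∀ j, Bornology.IsBounded (B j)) {q : ℝ}
    (hq0 : 0 ≤ q) (hq1 : q < 1) (hq : ∀ e, G.r e ≤ q) {i : V} {W : Set (Pt d)} (hW : IsOpen W)
    (hWK : (W ∩ K i).Nonempty) :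
    ∃ γ : List E, G.IsPathFrom i γ ∧ ∃ ε > 0,
      ∀ y ∈ B (G.pathTerm i γ), ∀ z ∉ W, ε < dist (G.pathMap γ y) z := by
  obtain ⟨x, hxW, hxK⟩ := hWK
  obtain ⟨ε, hε, hball⟩ := Metric.isOpen_iff.mp hW x hxW
  have hbdd : Bornology.IsBounded (⋃ j, (K j ∪ B j)) :=
    Bornology.isBounded_iUnion.mpr fun j => (hK.1 j).isBounded.union (hB j)
  obtain ⟨D, hD⟩ := Metric.isBounded_iff.mp hbdd
  have hD' : 0 < max D 1 := lt_max_of_lt_right one_pos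
  obtain ⟨n, hn⟩ := exists_pow_lt_of_lt_one (show 0 < ε / 2 / max D 1 by positivity) hq1
  rw [lt_div_iff₀ hD'] at hn
  obtain ⟨γ, hlen, hγ, x', hx', rfl⟩ := hK.exists_path n i x hxK
  refine ⟨γ, hγ, ε / 2, by positivity, fun y hy z hz => ?_⟩
  have h1 : dist y x' ≤ max D 1 := le_max_of_le_left <|
    hD (mem_iUnion.mpr ⟨_, Or.inr hy⟩) (mem_iUnion.mpr ⟨_, Or.inl hx'⟩)
  have h2 : dist (G.pathMap γ y) (G.pathMap γ x') < ε / 2 := by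
    rw [G.dist_pathMap]
    refine lt_of_le_of_lt ?_ hn
    rw [← hlen]
    exact mul_le_mul (G.pathRatio_le_pow hq γ) h1 dist_nonneg (by positivity)
  have h3 : ε ≤ dist z (G.pathMap γ x') := by
    by_contra! h
    exact hz (hball h)
  have h4 := dist_triangle_left z (G.pathMap γ x') (G.pathMap γ y)
  linarith

/-- The layer splits into a part of the condensation set and images of layers along the edges;
along a distinguished edge, the reference set `W` is pulled back. -/
theorem boundaryLayer_subset {C KC U : V → Set (Pt d)} (hKC : G.IsInhomAttractor C KC)
    (hU : ∀ e, MapsTo (G.S e) (U (G.term e)) (U (G.init e))) [DecidableEq V] [DecidableEq E]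
    (e₀ : E) {W : Set (Pt d)} (hW : U (G.init e₀) ⊆ W) (δ : ℝ) :
    boundaryLayer (KC (G.init e₀)) W δ ⊆ C (G.init e₀) ∪
      ((⋃ e ∈ (Finset.univ.filter fun e => G.init e = G.init e₀).erase e₀,
        G.S e '' boundaryLayer (KC (G.term e)) (U (G.term e)) (δ / G.r e)) ∪
      G.S e₀ '' boundaryLayer (KC (G.term e₀)) (G.S e₀ ⁻¹' W) (δ / G.r e₀)) := by
  rintro x ⟨hx, z, hz, hxz⟩
  rw [hKC.2.2] at hx
  rcases hx with hx | hx
  · simp only [mem_ofPred_eq, mem_iUnion, exists_prop] at hx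
    obtain ⟨e, he, y, hy, rfl⟩ := hx
    obtain ⟨w, rfl⟩ := surjective_of_dist_eq_mul (G.r_pos e) (G.S_sim e) z
    have hyw : dist y w ≤ δ / G.r e := by
      rw [le_div_iff₀ (G.r_pos e), mul_comm, ← G.S_sim]
      exact hxz
    right
    by_cases hee : e = e₀
    · subst hee
      exact Or.inr ⟨y, ⟨hy, w, hz, hyw⟩, rfl⟩
    · left
      refine mem_iUnion₂.mpr ⟨e, by simp [hee, he], y, ⟨hy, w, fun hw => hz (hW ?_), hyw⟩, rfl⟩
      rw [← he]
      exact hU e hw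
  · exact Or.inl hx

/-- The scaled covering number of the boundary layer of `A` relative to `W`. -/
def scaledLayerCount (s : ℝ) (A W : Set (Pt d)) (t : ℝ) : ℝ :=
  Real.exp (-s * t) * coveringNumber (boundaryLayer A W (Real.exp (-t))) (Real.exp (-t))

theorem exp_mul_coveringNumber_image_le (e : E) {A W : Set (Pt d)} (hA : Bornology.IsBounded A)
    (s t : ℝ) :
    Real.exp (-s * t) * coveringNumber
        (G.S e '' boundaryLayer A W (Real.exp (-t) / G.r e)) (Real.exp (-t)) ≤
      G.r e ^ s * scaledLayerCount s A W (t + Real.log (G.r e)) := by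
  have h1 : Real.exp (-t) / G.r e = Real.exp (-(t + Real.log (G.r e))) := by
    rw [neg_add, Real.exp_add, Real.exp_neg (Real.log _), Real.exp_log (G.r_pos e), div_eq_mul_inv]
  have h2 : Real.exp (-s * t) = G.r e ^ s * Real.exp (-s * (t + Real.log (G.r e))) := by
    rw [Real.rpow_def_of_pos (G.r_pos e), ← Real.exp_add]
    ring_nf
  have h3 := coveringNumber_image_le (A := boundaryLayer A W (Real.exp (-t) / G.r e))
    (G.S_sim e) (G.r_pos e) (hA.subset (sep_subset _ _)) (Real.exp_pos (-t))
  rw [scaledLayerCount, ← mul_assoc, ← h2]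
  refine mul_le_mul_of_nonneg_left ?_ (Real.exp_pos _).le
  rw [← h1]
  exact_mod_cast h3

/-- Following a path whose image avoids the boundary layer saves the mass of that path. -/
theorem scaledLayerCount_le {C KC U : V → Set (Pt d)} (hKC : G.IsInhomAttractor C KC)
    (hC : ∀ i, Bornology.IsBounded (C i))
    (hU : ∀ e, MapsTo (G.S e) (U (G.term e)) (U (G.init e))) [DecidableEq V]
    {s : ℝ} (hs : 0 ≤ s) {v : V → ℝ}
    (hv : ∀ i, ∑ e with G.init e = i, G.r e ^ s * v (G.term e) ≤ v i)
    {a b : ℝ} (hb0 : 0 ≤ b) (hb : ∀ e, b ≤ -Real.log (G.r e)) (ha : ∀ e, -Real.log (G.r e) ≤ a)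
    {M κ : ℝ} (hM : 0 ≤ M) (hκ : 0 ≤ κ) (γ : List E) :
    ∀ (i : V) (W : Set (Pt d)) (t : ℝ), G.IsPathFrom i γ → U i ⊆ W →
      (∀ y ∈ KC (G.pathTerm i γ), ∀ z ∉ W, Real.exp (-t) < dist (G.pathMap γ y) z) →
      (∀ j, ∀ u ∈ Icc (t - γ.length * a) (t - b),
        scaledLayerCount s (KC j) (U j) u ≤ M * v j) →
      (∀ j, ∀ u ∈ Icc (t - γ.length * a) t,
        Real.exp (-s * u) * coveringNumber (C j) (Real.exp (-u)) ≤ κ) →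
      scaledLayerCount s (KC i) W t ≤
        M * (v i - G.pathRatio γ ^ s * v (G.pathTerm i γ)) + γ.length * κ := by
  classical
  have hKCb : ∀ j, Bornology.IsBounded (KC j) := fun j => (hKC.1 j).isBounded
  have hLb : ∀ j (W : Set (Pt d)) δ, Bornology.IsBounded (boundaryLayer (KC j) W δ) :=
    fun j W δ => (hKCb j).subset (sep_subset _ _)
  induction γ with
  | nil =>
    intro i W t _ _ hdeep _ _
    have hempty : boundaryLayer (KC i) W (Real.exp (-t)) = ∅ := by
      refine eq_empty_of_forall_notMem ?_
      rintro x ⟨hx, z, hz, hxz⟩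
      exact absurd (hdeep x hx z hz) (not_lt.mpr hxz)
    simp [scaledLayerCount, hempty, coveringNumber_empty, pathRatio, pathTerm]
  | cons e₀ γ ih =>
    rintro _ W t ⟨rfl, hγ⟩ hUW hdeep hH hF
    have ha0 : 0 ≤ a := (hb0.trans (hb e₀)).trans (ha e₀)
    have hlen : (0 : ℝ) ≤ γ.length * a := by positivity
    simp only [List.length_cons, Nat.cast_add, Nat.cast_one, add_mul, one_mul] at hH hF ⊢
    set X₀ : Set (Pt d) := G.S e₀ '' boundaryLayer (KC (G.term e₀)) (G.S e₀ ⁻¹' W)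
      (Real.exp (-t) / G.r e₀)
    set X : E → Set (Pt d) := fun e => G.S e '' boundaryLayer (KC (G.term e)) (U (G.term e))
      (Real.exp (-t) / G.r e)
    set I : Finset E := {e ∈ Finset.univ | G.init e = G.init e₀} with hI
    have hSb : ∀ e (A : Set (Pt d)), Bornology.IsBounded A → Bornology.IsBounded (G.S e '' A) :=
      fun e A hA => LipschitzWith.isBounded_image
        (K := ⟨G.r e, (G.r_pos e).le⟩) (LipschitzWith.of_dist_le_mul fun x y =>
          (G.S_sim e x y).le) hA
    have hXb : Bornology.IsBounded (⋃ e ∈ I.erase e₀, X e) :=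
      (Bornology.isBounded_biUnion_finset _).mpr fun e _ => hSb e _ (hLb _ _ _)
    have hX₀b : Bornology.IsBounded X₀ := hSb e₀ _ (hLb _ _ _)
    have hcount : (coveringNumber (boundaryLayer (KC (G.init e₀)) W (Real.exp (-t)))
        (Real.exp (-t)) : ℝ) ≤ coveringNumber (C (G.init e₀)) (Real.exp (-t)) +
          (∑ e ∈ I.erase e₀, (coveringNumber (X e) (Real.exp (-t)) : ℝ) +
            coveringNumber X₀ (Real.exp (-t))) := by
      have h1 := coveringNumber_mono (G.boundaryLayer_subset hKC hU e₀ hUW (Real.exp (-t)))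
        ((hC _).union (hXb.union hX₀b)) (Real.exp_pos (-t))
      have h2 := coveringNumber_union_le (hC (G.init e₀)) (hXb.union hX₀b) (Real.exp_pos (-t))
      have h3 := coveringNumber_union_le hXb hX₀b (Real.exp_pos (-t))
      have h4 := coveringNumber_biUnion_le (I.erase e₀) X (fun e _ => hSb e _ (hLb _ _ _))
        (Real.exp_pos (-t))
      have h5 := h1.trans (h2.trans (Nat.add_le_add_left
        (h3.trans (Nat.add_le_add_right h4 _)) _))
      exact_mod_cast h5
    have hedge : ∀ e, Real.exp (-s * t) * coveringNumber (X e) (Real.exp (-t)) ≤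
        M * (G.r e ^ s * v (G.term e)) := by
      intro e
      refine (G.exp_mul_coveringNumber_image_le e (hKCb _) s t).trans ?_
      have h := hH (G.term e) (t + Real.log (G.r e))
        ⟨by linarith [ha e], by linarith [hb e]⟩
      have hr : 0 ≤ G.r e ^ s := Real.rpow_nonneg (G.r_pos e).le s
      calc _ ≤ G.r e ^ s * (M * v (G.term e)) := mul_le_mul_of_nonneg_left h hr
        _ = _ := by ring
    have hmain : Real.exp (-s * t) * coveringNumber X₀ (Real.exp (-t)) ≤
        G.r e₀ ^ s * (M * (v (G.term e₀) - G.pathRatio γ ^ s * v (G.pathTerm (G.term e₀) γ)) +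
          γ.length * κ) := by
      refine (G.exp_mul_coveringNumber_image_le e₀ (hKCb _) s t).trans ?_
      refine mul_le_mul_of_nonneg_left ?_ (Real.rpow_nonneg (G.r_pos e₀).le s)
      refine ih (G.term e₀) (G.S e₀ ⁻¹' W) (t + Real.log (G.r e₀)) hγ
        (fun x hx => hUW (hU e₀ hx)) (fun y hy z hz => ?_) (fun j u hu => hH j u ?_)
        (fun j u hu => hF j u ?_)
      · have h := hdeep y hy (G.S e₀ z) hz
        simp only [pathMap, Function.comp_apply, G.S_sim] at h
        rw [neg_add, Real.exp_add, Real.exp_neg (Real.log _), Real.exp_log (G.r_pos e₀),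
          ← div_eq_mul_inv, div_lt_iff₀ (G.r_pos e₀), mul_comm]
        exact h
      · exact ⟨by linarith [hu.1, ha e₀], by linarith [hu.2, hb e₀]⟩
      · exact ⟨by linarith [hu.1, ha e₀], by linarith [hu.2, hb e₀]⟩
    have hsum : ∑ e ∈ I.erase e₀, G.r e ^ s * v (G.term e) ≤
        v (G.init e₀) - G.r e₀ ^ s * v (G.term e₀) := by
      have h := hv (G.init e₀)
      rw [← Finset.sum_erase_add I _ (show e₀ ∈ I by simp [hI])] at h
      linarith
    have hF0 := hF (G.init e₀) t ⟨by linarith, le_rfl⟩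
    have hr1 : G.r e₀ ^ s ≤ 1 := Real.rpow_le_one (G.r_pos e₀).le (G.r_lt_one e₀).le hs
    have hratio : G.pathRatio (e₀ :: γ) ^ s = G.r e₀ ^ s * G.pathRatio γ ^ s := by
      rw [← Real.mul_rpow (G.r_pos e₀).le (G.pathRatio_pos γ).le]
      simp [pathRatio]
    have hκ' : G.r e₀ ^ s * (γ.length * κ) ≤ γ.length * κ :=
      mul_le_of_le_one_left (by positivity) hr1
    calc scaledLayerCount s (KC (G.init e₀)) W t
        ≤ Real.exp (-s * t) * (coveringNumber (C (G.init e₀)) (Real.exp (-t)) +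
          (∑ e ∈ I.erase e₀, (coveringNumber (X e) (Real.exp (-t)) : ℝ) +
            coveringNumber X₀ (Real.exp (-t)))) :=
          mul_le_mul_of_nonneg_left hcount (Real.exp_pos _).le
      _ = Real.exp (-s * t) * coveringNumber (C (G.init e₀)) (Real.exp (-t)) +
          (∑ e ∈ I.erase e₀, Real.exp (-s * t) * coveringNumber (X e) (Real.exp (-t)) +
            Real.exp (-s * t) * coveringNumber X₀ (Real.exp (-t))) := by
          rw [mul_add, mul_add, Finset.mul_sum]
      _ ≤ κ + (∑ e ∈ I.erase e₀, M * (G.r e ^ s * v (G.term e)) +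
            G.r e₀ ^ s * (M * (v (G.term e₀) -
              G.pathRatio γ ^ s * v (G.pathTerm (G.term e₀) γ)) + γ.length * κ)) :=
          add_le_add hF0 (add_le_add (Finset.sum_le_sum fun e _ => hedge e) hmain)
      _ ≤ κ + (M * (v (G.init e₀) - G.r e₀ ^ s * v (G.term e₀)) +
            G.r e₀ ^ s * (M * (v (G.term e₀) -
              G.pathRatio γ ^ s * v (G.pathTerm (G.term e₀) γ)) + γ.length * κ)) := by
          rw [← Finset.mul_sum]
          gcongr
      _ ≤ M * (v (G.init e₀) -
            G.pathRatio (e₀ :: γ) ^ s * v (G.pathTerm (G.init e₀) (e₀ :: γ))) +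
          (γ.length * κ + κ) := by
          rw [hratio]
          simp only [pathTerm]
          linarith

/-- The scaled covering numbers of the boundary layers of the inhomogeneous attractors vanish. -/
theorem tendsto_scaledLayerCount {C K KC U : V → Set (Pt d)} [DecidableEq V]
    (hSC : G.StronglyConnected) (hK : G.IsAttractor K) (hKC : G.IsInhomAttractor C KC)
    (hC : ∀ i, Bornology.IsBounded (C i)) (hUo : ∀ i, IsOpen (U i))
    (hU : ∀ e, MapsTo (G.S e) (U (G.term e)) (U (G.init e)))
    (hUK : ∀ i, (U i ∩ K i).Nonempty) {s : ℝ} (hs : 0 ≤ s)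
    (hρ : matrixSpectralRadius (G.Amatrix s) ≤ 1)
    (hF : ∀ i, Tendsto (fun t : ℝ => Real.exp (-s * t) *
      (coveringNumber (C i) (Real.exp (-t)) : ℝ)) atTop (𝓝 0)) (i : V) :
    Tendsto (scaledLayerCount s (KC i) (U i)) atTop (𝓝 0) := by
  obtain ⟨v, hv0, hv⟩ := G.exists_pos_subinvariant hSC hρ
  obtain ⟨b, hb0, hb⟩ := exists_pos_forall_le (fun e => -Real.log (G.r e))
    fun e => neg_pos.mpr (Real.log_neg (G.r_pos e) (G.r_lt_one e))
  obtain ⟨a', ha'⟩ := (Set.finite_range fun e => -Real.log (G.r e)).bddAbove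
  set a := max a' 0
  have ha0 : 0 ≤ a := le_max_right _ _
  have ha : ∀ e, -Real.log (G.r e) ≤ a := fun e => (ha' (mem_range_self e)).trans (le_max_left _ _)
  have hq : ∀ e, G.r e ≤ Real.exp (-b) := fun e => by
    rw [← Real.log_le_iff_le_exp (G.r_pos e)]
    linarith [hb e]
  have hKCb : ∀ j, Bornology.IsBounded (KC j) := fun j => (hKC.1 j).isBounded
  choose γ hγ ε hε hdeep using fun j => hK.exists_deep_path hKCb (Real.exp_pos (-b)).le
    (Real.exp_lt_one_iff.mpr (by linarith)) hq (hUo j) (hUK j)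
  obtain ⟨ε₀, hε₀, hε₀le⟩ := exists_pos_forall_le ε hε
  obtain ⟨c', hc', hc'le⟩ := exists_pos_forall_le
    (fun j => G.pathRatio (γ j) ^ s * v (G.pathTerm j (γ j)) / v j)
    fun j => div_pos (mul_pos (Real.rpow_pos_of_pos (G.pathRatio_pos _) s) (hv0 _)) (hv0 j)
  obtain ⟨m, hm, hmle⟩ := exists_pos_forall_le v hv0
  obtain ⟨L, hL⟩ := (Set.finite_range fun j => (γ j).length).bddAbove
  have hlen : ∀ j, ((γ j).length : ℝ) ≤ L := fun j => by exact_mod_cast hL (mem_range_self j)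
  have hlena : ∀ j, ((γ j).length : ℝ) * a ≤ L * a := fun j =>
    mul_le_mul_of_nonneg_right (hlen j) ha0
  refine tendsto_zero_of_contractive_renewal (H := fun j => scaledLayerCount s (KC j) (U j))
    (v := v) (a := L * a) (b := b) (c := min c' 1) hv0
    (fun j t => by unfold scaledLayerCount; positivity) hb0 (lt_min hc' one_pos)
    (min_le_right _ _) ?_ ?_ i
  · intro x y
    obtain ⟨N, hN⟩ := (Set.finite_range fun j =>
      Real.exp (-s * x) * (coveringNumber (KC j) (Real.exp (-y)) : ℝ) / v j).bddAbove
    refine ⟨N, fun j u hu => ?_⟩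
    rw [← div_le_iff₀ (hv0 j)]
    refine le_trans ?_ (hN (mem_range_self j))
    have h1 : coveringNumber (boundaryLayer (KC j) (U j) (Real.exp (-u))) (Real.exp (-u)) ≤
        coveringNumber (KC j) (Real.exp (-y)) :=
      (coveringNumber_mono (sep_subset _ _) (hKCb j) (Real.exp_pos _)).trans
        (coveringNumber_anti (hKCb j) (Real.exp_pos _)
          (Real.exp_le_exp.mpr (neg_le_neg hu.2)))
    have h2 : Real.exp (-s * u) ≤ Real.exp (-s * x) :=
      Real.exp_le_exp.mpr (by nlinarith [hu.1])
    refine div_le_div_of_nonneg_right ?_ (hv0 j).le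
    exact mul_le_mul h2 (by exact_mod_cast h1) (by positivity) (Real.exp_pos _).le
  · intro κ hκ
    have hL1 : (0 : ℝ) < L + 1 := by positivity
    set κ' := κ * m / (L + 1) with hκ'
    have hκ'0 : 0 < κ' := by positivity
    have hev : ∀ᶠ u in atTop, ∀ j,
        Real.exp (-s * u) * (coveringNumber (C j) (Real.exp (-u)) : ℝ) < κ' :=
      eventually_all.mpr fun j => (hF j).eventually_lt_const hκ'0
    obtain ⟨T, hT⟩ := eventually_atTop.mp hev
    have hexp : ∀ᶠ t : ℝ in atTop, Real.exp (-t) < ε₀ :=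
      Real.tendsto_exp_neg_atTop_nhds_zero.eventually_lt_const hε₀
    filter_upwards [hexp, eventually_ge_atTop (T + L * a)] with t hte htT M hM hH j
    have h := G.scaledLayerCount_le hKC hC hU hs hv hb0.le hb ha hM hκ'0.le (γ j) j (U j) t (hγ j)
      Subset.rfl
      (fun y hy z hz => (hte.trans_le (hε₀le j)).trans (hdeep j y hy z hz))
      (fun k u hu => hH k u ⟨by linarith [hu.1, hlena j], hu.2⟩)
      (fun k u hu => (hT u (by linarith [hu.1, hlena j]) k).le)
    refine h.trans ?_
    have h1 : min c' 1 * v j ≤ G.pathRatio (γ j) ^ s * v (G.pathTerm j (γ j)) := by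
      rw [← le_div_iff₀ (hv0 j)]
      exact (min_le_left _ _).trans (hc'le j)
    have h2 : ((γ j).length : ℝ) * κ' ≤ κ * v j := by
      calc ((γ j).length : ℝ) * κ' ≤ (L + 1) * κ' :=
            mul_le_mul_of_nonneg_right (by linarith [hlen j]) hκ'0.le
        _ = κ * m := by rw [hκ']; field_simp
        _ ≤ κ * v j := mul_le_mul_of_nonneg_left (hmle j) hκ.le
    nlinarith [mul_le_mul_of_nonneg_left h1 hM]

end MWGraph

theorem stmt12 {d : ℕ} {V E : Type} [Fintype V] [Fintype E] [DecidableEq V]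
    (G : MWGraph d V E) (hSC : G.StronglyConnected)
    (C K KC U : V → Set (Pt d))
    (hC : G.IsCondensation C) (hK : G.IsAttractor K) (hKC : G.IsInhomAttractor C KC)
    (hU : G.IsOSCWith U) (hUK : ∀ i, (U i ∩ K i).Nonempty)
    (hCU : ∀ i, C i ⊆ closure (U i))
    (s0 : ℝ) (hs0 : IsS0 G s0)
    (hint : ∀ i : V, ∫⁻ t in Set.Ioi (0 : ℝ),
      ENNReal.ofReal (Real.exp (-s0 * t) * (coveringNumber (C i) (Real.exp (-t)) : ℝ)) < ⊤)
 :
    ∀ i : V, Tendsto (fun t : ℝ => Real.exp (-s0 * t) *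
      ((coveringNumber (KC i) (Real.exp (-t)) : ℝ) -
        (coveringNumber (KC i \ Metric.cthickening (Real.exp (-t)) (frontier (U i)))
          (Real.exp (-t)) : ℝ))) atTop (𝓝 0) := by
  have hmaps : ∀ e, MapsTo (G.S e) (U (G.term e)) (U (G.init e)) := fun e x hx =>
    hU.2.2.2.2.1 (G.init e) (mem_iUnion₂.mpr ⟨e, rfl, mem_image_of_mem _ hx⟩)
  have hCb : ∀ i, Bornology.IsBounded (C i) := fun i => (hC i).1.isBounded
  intro i
  have hlayer := G.tendsto_scaledLayerCount hSC hK hKC hCb hU.2.1 hmaps hUK hs0.1 hs0.2.le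
    (fun j => tendsto_exp_mul_coveringNumber hs0.1 (hCb j) (hint j)) i
  have hKCb : Bornology.IsBounded (KC i) := (hKC.1 i).isBounded
  refine squeeze_zero (fun t => ?_) (fun t => ?_) hlayer
  · refine mul_nonneg (Real.exp_pos _).le (sub_nonneg.mpr ?_)
    exact_mod_cast coveringNumber_mono sdiff_subset hKCb (Real.exp_pos _)
  · refine mul_le_mul_of_nonneg_left ?_ (Real.exp_pos _).le
    have hsub : KC i ⊆ (KC i \ cthickening (Real.exp (-t)) (frontier (U i))) ∪
        boundaryLayer (KC i) (U i) (Real.exp (-t)) := by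
      intro x hx
      by_cases hxt : x ∈ cthickening (Real.exp (-t)) (frontier (U i))
      · right
        rw [isClosed_frontier.cthickening_eq_biUnion_closedBall (Real.exp_pos _).le] at hxt
        obtain ⟨z, hz, hxz⟩ := mem_iUnion₂.mp hxt
        rw [(hU.2.1 i).frontier_eq] at hz
        exact ⟨hx, z, hz.2, hxz⟩
      · exact Or.inl ⟨hx, hxt⟩
    have hb₁ := hKCb.subset (sdiff_subset (t := cthickening (Real.exp (-t)) (frontier (U i))))
    have hb₂ : Bornology.IsBounded (boundaryLayer (KC i) (U i) (Real.exp (-t))) :=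
      hKCb.subset (sep_subset _ _)
    have h := (coveringNumber_mono hsub (hb₁.union hb₂) (Real.exp_pos (-t))).trans
      (coveringNumber_union_le hb₁ hb₂ (Real.exp_pos (-t)))
    rw [sub_le_iff_le_add']
    exact_mod_cast h
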